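/- arXiv:2011.13772 — 2 statements merged into one kernel-verified Lean document; each statement's English description precedes it below -/
import Mathlib

section
/- Let N ≥ 2 and let Ŵ = V Λ Vᵀ ∈ ℝ^{n×n} be an eigendecomposition of the symmetric matrix Ŵ, with V orthogonal and Λ = diag(λ_1, …, λ_n). Let c ∈ (1,2) be the maximal real solution of the equation 1 = (c−1)·c^{N−1}, let 0 < β/(c−1) < α, and consider gradient descent with perturbed identical initialization W_1(0) = (α−β)·I and W_j(0) = α·I for j ≥ 2. Set W(k) = W_N(k)···W_1(k) and M = max(α, ‖Ŵ‖^{1/N}). If 0 < η < 1/(9N·(cM)^{2N−2}), then: (i) W(k) converges to Ŵ as k → ∞; (ii) for every k the matrix E(k) = Vᵀ·W(k)·V − Λ is diagonal; and (iii) for every k and every i, if 0 ≤ λ_i < α^N then |E_{ii}(k)| ≤ α^N, and if −α^N ≤ λ_i < 0 then |E_{ii}(k)| ≤ 2·α^N. -/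
/-!
Conjugation by the orthogonal matrix `V` turns diagonal matrices into a commutative algebra that
contains `Ŵ`, all initial factors, and hence all iterates. The dynamics therefore decouples into one
planar recursion per eigenvalue `l`: the first factor has eigenvalue `a`, every other factor has
eigenvalue `b`, and with `N = m + 2`, `e = a b^(m+1) - l`, `s = η e b^m`,
`a' = a - s b`, `b' = b - s a`.

Three facts about the planar recursion carry the proof.

* `b' + a' = (1 - s)(b + a)` and `b' - a' = (1 + s)(b - a)`, so `|a| ≤ b` persists and `b² - a²` does
  not increase. Together with `|a b^(m+1)| ≤ M^(m+2)` this forces `b ≤ c M` (`upper_bound`).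
* Under this bound the step size is so small that the error does not change sign and does not grow:
  `e' = (1 - κ) e` with `κ ∈ [0, 1]` (`error_contract`, by the mean value theorem). This keeps
  `|a b^(m+1)| ≤ M^(m+2)` and gives the eigenvalue-wise error bounds.
* As the sign of `e` is constant, `a` is monotone and bounded, so `η b^(m+1) e = a - a'` tends to zero.
  If `e ≤ 0` then `b ≥ a ≥ α - β > 0`; if `e ≥ 0` then `b - a` is nondecreasing, so `2 b ≥ β > 0`, which
  is where the perturbation is needed. In both cases `e → 0`.
-/

open Matrix Filter

/-! ### The scalar recursion -/

/-- The eigenvalues `(a, b)` of the first factor and of each other factor along an eigenvector of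
`Ŵ` with eigenvalue `l`, for gradient descent on `m + 2` factors. -/
def scalarGD (m : ℕ) (η l a₀ b₀ : ℝ) : ℕ → ℝ × ℝ
  | 0 => (a₀, b₀)
  | k + 1 =>
    let x := scalarGD m η l a₀ b₀ k
    (x.1 - η * (x.2 ^ (m + 1) * (x.1 * x.2 ^ (m + 1) - l)),
      x.2 - η * (x.1 * x.2 ^ m * (x.1 * x.2 ^ (m + 1) - l)))

/-- Bounds on `η b^m` times the negated derivative of `s ↦ (a - s b)(b - s a)^(m+1)` at `s = r`.
Nonnegativity holds for both signs of `a`, since `m + 2` times `|r|` is small enough for the quadratic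
form `b² + (m+1) a² - (m+2) r a b` to be nonnegative. -/
lemma kappa_bounds (m : ℕ) (a b η r : ℝ) (hη : 0 < η) (hb : 0 < b) (hab : |a| ≤ b)
    (hr : (m + 2) * |r| ≤ 2 / 9) (hη9 : η * ((m + 2) * b ^ (2 * m + 2)) ≤ 1 / 9) :
    0 ≤ η * b ^ m * ((b - r * a) ^ m * (b ^ 2 + (m + 1) * a ^ 2 - (m + 2) * r * a * b)) ∧
    η * b ^ m * ((b - r * a) ^ m * (b ^ 2 + (m + 1) * a ^ 2 - (m + 2) * r * a * b)) ≤ 1 := by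
  have hm0 : (0 : ℝ) ≤ m := Nat.cast_nonneg m
  have hr1 : |r| ≤ 1 / 9 := by nlinarith [abs_nonneg r]
  have hra : |r * a| ≤ |r| * b := by
    rw [abs_mul]; exact mul_le_mul_of_nonneg_left hab (abs_nonneg r)
  have hcross : |(m + 2) * r * a * b| ≤ 2 / 9 * b ^ 2 := by
    have h1 : |(m + 2) * r * a * b| = (m + 2) * (|r * a| * b) := by
      rw [show (m + 2) * r * a * b = (m + 2) * ((r * a) * b) by ring, abs_mul, abs_mul,
        abs_of_pos hb, abs_of_pos (by positivity : (0 : ℝ) < m + 2)]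
    rw [h1]
    calc ((m : ℝ) + 2) * (|r * a| * b) ≤ (m + 2) * (|r| * b * b) := by gcongr
      _ = ((m + 2) * |r|) * b ^ 2 := by ring
      _ ≤ 2 / 9 * b ^ 2 := by gcongr
  have hu0 : 0 ≤ b - r * a := by
    have := (abs_le.mp hra).2
    nlinarith
  have hu1 : b - r * a ≤ (1 + |r|) * b := by
    have := (abs_le.mp hra).1
    linarith
  have ha2 : a ^ 2 ≤ b ^ 2 := by
    rw [← sq_abs a]; exact pow_le_pow_left₀ (abs_nonneg a) hab 2
  have hq0 : 0 ≤ b ^ 2 + (m + 1) * a ^ 2 - (m + 2) * r * a * b := by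
    have := (abs_le.mp hcross).2
    have : 0 ≤ ((m : ℝ) + 1) * a ^ 2 := by positivity
    linarith [sq_nonneg b]
  have hq1 : b ^ 2 + (m + 1) * a ^ 2 - (m + 2) * r * a * b ≤ 2 * ((m + 2) * b ^ 2) := by
    have := (abs_le.mp hcross).1
    have : ((m : ℝ) + 1) * a ^ 2 ≤ (m + 1) * b ^ 2 := by gcongr
    have : 0 ≤ (m : ℝ) * b ^ 2 := by positivity
    linarith [sq_nonneg b]
  generalize b ^ 2 + (m + 1) * a ^ 2 - (m + 2) * r * a * b = q at hq0 hq1 ⊢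
  generalize b - r * a = u at hu0 hu1 ⊢
  have hexp : (1 + |r|) ^ m ≤ 3 := by
    have h1 : 1 + |r| ≤ Real.exp |r| := by linarith [Real.add_one_le_exp |r|]
    have h0 : 0 ≤ 1 + |r| := by positivity
    calc (1 + |r|) ^ m ≤ (Real.exp |r|) ^ m := pow_le_pow_left₀ h0 h1 m
      _ = Real.exp (m * |r|) := by rw [← Real.exp_nat_mul]
      _ ≤ Real.exp 1 := by
          apply Real.exp_le_exp.mpr
          linarith [abs_nonneg r]
      _ ≤ 3 := by linarith [Real.exp_one_lt_d9]
  have hum : u ^ m ≤ 3 * b ^ m := by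
    calc u ^ m ≤ ((1 + |r|) * b) ^ m := pow_le_pow_left₀ hu0 hu1 m
      _ = (1 + |r|) ^ m * b ^ m := by rw [mul_pow]
      _ ≤ 3 * b ^ m := by gcongr
  refine ⟨by positivity, ?_⟩
  calc η * b ^ m * (u ^ m * q) ≤ η * b ^ m * ((3 * b ^ m) * (2 * ((m + 2) * b ^ 2))) := by
        gcongr
    _ = 6 * (η * ((m + 2) * b ^ (2 * m + 2))) := by ring
    _ ≤ 1 := by linarith

/-- The factor `κ` is `η b^m Q`, where `-s Q` is the increment of `t ↦ (a - t s b)(b - t s a)^(m+1)`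
over `[0, 1]`. -/
lemma error_contract (m : ℕ) (a b l η : ℝ) (hη : 0 < η) (hb : 0 < b) (hab : |a| ≤ b)
    (hs : (m + 2) * |η * (a * b ^ (m + 1) - l) * b ^ m| ≤ 2 / 9)
    (hη9 : η * ((m + 2) * b ^ (2 * m + 2)) ≤ 1 / 9) :
    ∃ κ : ℝ, 0 ≤ κ ∧ κ ≤ 1 ∧
      (a - η * (b ^ (m + 1) * (a * b ^ (m + 1) - l))) *
        (b - η * (a * b ^ m * (a * b ^ (m + 1) - l))) ^ (m + 1) - l =
      (1 - κ) * (a * b ^ (m + 1) - l) := by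
  set e := a * b ^ (m + 1) - l with he
  set s := η * e * b ^ m with hsdef
  have hder : ∀ t : ℝ, HasDerivAt (fun t : ℝ => (a - t * s * b) * (b - t * s * a) ^ (m + 1))
      (-s * ((b - t * s * a) ^ m *
        (b ^ 2 + (m + 1) * a ^ 2 - (m + 2) * (t * s) * a * b))) t := by
    intro t
    have h1 : HasDerivAt (fun t : ℝ => a - t * s * b) (-(1 * s * b)) t :=
      (((hasDerivAt_id t).mul_const s).mul_const b).const_sub a
    have h2 : HasDerivAt (fun t : ℝ => b - t * s * a) (-(1 * s * a)) t :=
      (((hasDerivAt_id t).mul_const s).mul_const a).const_sub b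
    refine (h1.mul (h2.fun_pow (m + 1))).congr_deriv ?_
    rw [Nat.add_sub_cancel]
    push_cast
    ring
  obtain ⟨t, ⟨ht0, ht1⟩, ht⟩ := exists_hasDerivAt_eq_slope
    (fun t : ℝ => (a - t * s * b) * (b - t * s * a) ^ (m + 1)) _ (zero_lt_one)
    (fun t _ => (hder t).continuousAt.continuousWithinAt) (fun t _ => hder t)
  have hts : ((m : ℝ) + 2) * |t * s| ≤ 2 / 9 := by
    refine le_trans ?_ hs
    rw [abs_mul, abs_of_pos ht0]
    exact mul_le_mul_of_nonneg_left (mul_le_of_le_one_left (abs_nonneg s) ht1.le) (by positivity)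
  obtain ⟨hκ0, hκ1⟩ := kappa_bounds m a b η (t * s) hη hb hab hts hη9
  refine ⟨_, hκ0, hκ1, ?_⟩
  have h2 : a - η * (b ^ (m + 1) * e) = a - s * b := by rw [hsdef]; ring
  have h3 : b - η * (a * b ^ m * e) = b - s * a := by rw [hsdef]; ring
  rw [h2, h3]
  simp only [one_mul, zero_mul, sub_zero, div_one] at ht
  generalize (b - t * s * a) ^ m * (b ^ 2 + (m + 1) * a ^ 2 - (m + 2) * (t * s) * a * b) = q at ht ⊢
  have h4 : (a - s * b) * (b - s * a) ^ (m + 1) = e + l - s * q := by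
    rw [he]; linarith
  rw [h4, hsdef]
  ring

lemma upper_bound (m : ℕ) (a b c M : ℝ) (hM : 0 < M) (hc : 1 < c)
    (hD : b ^ 2 - a ^ 2 ≤ (1 - (2 - c) ^ 2) * M ^ 2)
    (hp : |a * b ^ (m + 1)| ≤ M ^ (m + 2)) : b ≤ c * M := by
  by_contra! hlt
  have hMb : M < b := by nlinarith
  have hb : 0 < b := hM.trans hMb
  have h1 : (c * M) ^ 2 < b ^ 2 := by gcongr
  have h2 : M ^ 2 < a ^ 2 := by
    nlinarith [mul_nonneg (sq_nonneg (c - 1)) (sq_nonneg M)]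
  have h3 : M < |a| := by
    rw [← sq_abs a] at h2
    exact lt_of_pow_lt_pow_left₀ 2 (abs_nonneg a) h2
  have h4 : M ^ (m + 1) < b ^ (m + 1) := by gcongr
  have h5 : M * M ^ (m + 1) < |a| * b ^ (m + 1) := by gcongr
  rw [abs_mul, abs_of_pos (pow_pos hb (m + 1))] at hp
  have : M ^ (m + 2) = M * M ^ (m + 1) := by ring
  linarith

/-- The region preserved by the scalar recursion. The constant in `sq_sub` comes from the
initialization: `a = α - β > (2 - c) α` and `b = α ≤ M`. -/
structure Region (m : ℕ) (c M a b : ℝ) : Prop where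
  pos : 0 < b
  abs_le : |a| ≤ b
  sq_sub : b ^ 2 - a ^ 2 ≤ (1 - (2 - c) ^ 2) * M ^ 2
  prod : |a * b ^ (m + 1)| ≤ M ^ (m + 2)

lemma step_size_bounds (m : ℕ) (l η c M a b : ℝ) (hη : 0 < η) (hM : 0 < M) (hc : 1 < c)
    (hl : |l| ≤ M ^ (m + 2)) (hη9 : η * ((m + 2) * (c * M) ^ (2 * m + 2)) ≤ 1 / 9)
    (h : Region m c M a b) :
    (m + 2) * |η * (a * b ^ (m + 1) - l) * b ^ m| ≤ 2 / 9 ∧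
    η * ((m + 2) * b ^ (2 * m + 2)) ≤ 1 / 9 := by
  have hbc := upper_bound m a b c M hM hc h.sq_sub h.prod
  have hb := h.pos
  have hMc : M ≤ c * M := by nlinarith
  constructor
  · have he : |a * b ^ (m + 1) - l| ≤ 2 * (c * M) ^ (m + 2) := by
      have h1 : M ^ (m + 2) ≤ (c * M) ^ (m + 2) := by gcongr
      have := abs_sub (a * b ^ (m + 1)) l
      linarith [h.prod]
    rw [abs_mul, abs_mul, abs_of_pos hη, abs_of_pos (pow_pos hb m)]
    calc ((m : ℝ) + 2) * (η * |a * b ^ (m + 1) - l| * b ^ m)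
        ≤ (m + 2) * (η * (2 * (c * M) ^ (m + 2)) * (c * M) ^ m) := by gcongr
      _ = 2 * (η * ((m + 2) * (c * M) ^ (2 * m + 2))) := by ring
      _ ≤ 2 / 9 := by linarith
  · refine le_trans ?_ hη9
    gcongr

/-- All properties of one step: the region is preserved, the error contracts without changing sign,
and `b - a` is nondecreasing as long as the error is nonnegative. -/
lemma region_step (m : ℕ) (l η c M a b a' b' : ℝ) (hη : 0 < η) (hM : 0 < M) (hc : 1 < c)
    (hl : |l| ≤ M ^ (m + 2)) (hη9 : η * ((m + 2) * (c * M) ^ (2 * m + 2)) ≤ 1 / 9)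
    (h : Region m c M a b)
    (ha' : a' = a - η * (b ^ (m + 1) * (a * b ^ (m + 1) - l)))
    (hb' : b' = b - η * (a * b ^ m * (a * b ^ (m + 1) - l))) :
    Region m c M a' b' ∧
    (∃ κ : ℝ, 0 ≤ κ ∧ κ ≤ 1 ∧ a' * b' ^ (m + 1) - l = (1 - κ) * (a * b ^ (m + 1) - l)) ∧
    (0 ≤ a * b ^ (m + 1) - l → b - a ≤ b' - a') := by
  obtain ⟨h1, h2⟩ := step_size_bounds m l η c M a b hη hM hc hl hη9 h
  have hb := h.pos
  have hκ : ∃ κ : ℝ, 0 ≤ κ ∧ κ ≤ 1 ∧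
      a' * b' ^ (m + 1) - l = (1 - κ) * (a * b ^ (m + 1) - l) := by
    rw [ha', hb']
    exact error_contract m a b l η hη hb h.abs_le h1 h2
  set e := a * b ^ (m + 1) - l with he
  set s := η * e * b ^ m with hs
  have hm0 : (0 : ℝ) ≤ m := Nat.cast_nonneg m
  have hsm : |s| ≤ 1 / 9 := by nlinarith [abs_nonneg s]
  obtain ⟨hs1, hs2⟩ := abs_le.mp hsm
  obtain ⟨hab1, hab2⟩ := abs_le.mp h.abs_le
  have hadd : b' + a' = (1 - s) * (b + a) := by rw [ha', hb', hs]; ring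
  have hsub : b' - a' = (1 + s) * (b - a) := by rw [ha', hb', hs]; ring
  have hadd0 : 0 ≤ b' + a' := by rw [hadd]; exact mul_nonneg (by linarith) (by linarith)
  have hsub0 : 0 ≤ b' - a' := by rw [hsub]; exact mul_nonneg (by linarith) (by linarith)
  refine ⟨⟨?_, abs_le.mpr ⟨by linarith, by linarith⟩, ?_, ?_⟩, hκ, ?_⟩
  · have : b' = b - s * a := by rw [hb', hs]; ring
    have h3 : |s * a| ≤ 1 / 9 * b := by
      rw [abs_mul]; exact mul_le_mul hsm h.abs_le (abs_nonneg a) (by norm_num)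
    have := (abs_le.mp h3).2
    linarith
  · have h3 : b' ^ 2 - a' ^ 2 = (1 - s ^ 2) * (b ^ 2 - a ^ 2) := by
      calc b' ^ 2 - a' ^ 2 = (b' + a') * (b' - a') := by ring
        _ = _ := by rw [hadd, hsub]; ring
    have h4 : 0 ≤ b ^ 2 - a ^ 2 := by nlinarith
    have := h.sq_sub
    nlinarith [mul_nonneg (sq_nonneg s) h4]
  · obtain ⟨κ, hκ0, hκ1, hκe⟩ := hκ
    -- The new product is a convex combination of the old one and `l`.
    have h3 : a' * b' ^ (m + 1) = (1 - κ) * (a * b ^ (m + 1)) + κ * l := by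
      rw [he] at hκe; linarith
    obtain ⟨p1, p2⟩ := abs_le.mp h.prod
    obtain ⟨l1, l2⟩ := abs_le.mp hl
    rw [h3]
    refine abs_le.mpr ⟨?_, ?_⟩ <;> nlinarith
  · intro he0
    have : 0 ≤ s := by positivity
    rw [hsub]
    nlinarith

/-- If `a` converges, its increments `η b^(m+1) e` vanish, hence so does `e` when `b` is bounded
away from zero. -/
lemma tendsto_error_zero (m : ℕ) (η δ A : ℝ) (a b e : ℕ → ℝ) (hη : 0 < η) (hδ : 0 < δ)
    (ha : ∀ k, a (k + 1) = a k - η * (b k ^ (m + 1) * e k)) (hA : Tendsto a atTop (nhds A))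
    (hb : ∀ k, δ ≤ b k) : Tendsto e atTop (nhds 0) := by
  have h1 : Tendsto (fun k => a k - a (k + 1)) atTop (nhds 0) := by
    simpa using hA.sub (hA.comp (tendsto_add_atTop_nat 1))
  have h2 : Tendsto (fun k => (η * δ ^ (m + 1))⁻¹ * |a k - a (k + 1)|) atTop (nhds 0) := by
    simpa using h1.abs.const_mul (η * δ ^ (m + 1))⁻¹
  refine squeeze_zero_norm (fun k => ?_) h2
  have hbk : 0 < b k := hδ.trans_le (hb k)
  have h3 : a k - a (k + 1) = η * (b k ^ (m + 1) * e k) := by rw [ha]; ring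
  rw [h3, Real.norm_eq_abs, abs_mul, abs_mul, abs_of_pos hη, abs_of_pos (pow_pos hbk (m + 1)),
    inv_mul_eq_div, le_div_iff₀ (by positivity)]
  have h4 : δ ^ (m + 1) ≤ b k ^ (m + 1) := by gcongr; exact hb k
  calc |e k| * (η * δ ^ (m + 1)) ≤ |e k| * (η * b k ^ (m + 1)) := by gcongr
    _ = _ := by ring

lemma scalar_convergence (m : ℕ) (l η c M α β : ℝ) (hη : 0 < η) (hc : 1 < c) (hc2 : c < 2)
    (hβ : 0 < β) (hβα : β < (c - 1) * α) (hα : 0 < α) (hαM : α ≤ M)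
    (hl : |l| ≤ M ^ (m + 2)) (hη9 : η * ((m + 2) * (c * M) ^ (2 * m + 2)) ≤ 1 / 9)
    (a b : ℕ → ℝ) (ha0 : a 0 = α - β) (hb0 : b 0 = α)
    (ha : ∀ k, a (k + 1) = a k - η * (b k ^ (m + 1) * (a k * b k ^ (m + 1) - l)))
    (hb : ∀ k, b (k + 1) = b k - η * (a k * b k ^ m * (a k * b k ^ (m + 1) - l))) :
    Tendsto (fun k => a k * b k ^ (m + 1) - l) atTop (nhds 0) ∧
    ∀ k, |a k * b k ^ (m + 1) - l| ≤ |(α - β) * α ^ (m + 1) - l| := by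
  have hM : 0 < M := hα.trans_le hαM
  have hβα' : (2 - c) * α < α - β := by linarith
  have hαβ : 0 < α - β := lt_trans (mul_pos (by linarith) hα) hβα'
  have hreg0 : Region m c M (a 0) (b 0) := by
    rw [ha0, hb0]
    refine ⟨hα, abs_le.mpr ⟨by linarith, by linarith⟩, ?_, ?_⟩
    · have h1 : ((2 - c) * α) ^ 2 ≤ (α - β) ^ 2 :=
        pow_le_pow_left₀ (mul_nonneg (by linarith) hα.le) hβα'.le 2
      have h2 : α ^ 2 ≤ M ^ 2 := by gcongr
      have h3 : 0 ≤ 1 - (2 - c) ^ 2 := by nlinarith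
      nlinarith
    · rw [abs_of_pos (by positivity)]
      calc (α - β) * α ^ (m + 1) ≤ M * M ^ (m + 1) := by gcongr; linarith
        _ = M ^ (m + 2) := by ring
  have hreg : ∀ k, Region m c M (a k) (b k) := by
    intro k
    induction k with
    | zero => exact hreg0
    | succ k ih => exact (region_step m l η c M _ _ _ _ hη hM hc hl hη9 ih (ha k) (hb k)).1
  have hstep := fun k =>
    (region_step m l η c M _ _ _ _ hη hM hc hl hη9 (hreg k) (ha k) (hb k)).2
  have hbK : ∀ k, b k ≤ c * M := fun k =>
    upper_bound m _ _ c M hM hc (hreg k).sq_sub (hreg k).prod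
  have hac := fun k => abs_le.mp (hreg k).abs_le
  constructor
  · rcases le_total 0 (a 0 * b 0 ^ (m + 1) - l) with h0 | h0
    · have hsign : ∀ k, 0 ≤ a k * b k ^ (m + 1) - l := by
        intro k
        induction k with
        | zero => exact h0
        | succ k ih =>
          obtain ⟨κ, -, h2, h3⟩ := (hstep k).1
          rw [h3]; exact mul_nonneg (by linarith) ih
      have hanti : Antitone a := antitone_nat_of_succ_le fun k => by
        rw [ha]
        have := (hreg k).pos
        have := hsign k
        have : 0 ≤ η * (b k ^ (m + 1) * (a k * b k ^ (m + 1) - l)) := by positivity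
        linarith
      have hgap : ∀ k, β ≤ b k - a k := by
        intro k
        induction k with
        | zero => rw [ha0, hb0]; linarith
        | succ k ih => exact ih.trans ((hstep k).2 (hsign k))
      have hbdd : BddBelow (Set.range a) := ⟨-(c * M), by
        rintro _ ⟨k, rfl⟩
        linarith [hbK k, (hac k).1]⟩
      exact tendsto_error_zero m η (β / 2) _ a b _ hη (by linarith) ha
        (tendsto_atTop_ciInf hanti hbdd) (fun k => by linarith [hgap k, (hac k).1])
    · have hsign : ∀ k, a k * b k ^ (m + 1) - l ≤ 0 := by
        intro k
        induction k with
        | zero => exact h0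
        | succ k ih =>
          obtain ⟨κ, -, h2, h3⟩ := (hstep k).1
          rw [h3]; exact mul_nonpos_of_nonneg_of_nonpos (by linarith) ih
      have hmono : Monotone a := monotone_nat_of_le_succ fun k => by
        rw [ha]
        have hbk := (hreg k).pos
        have : η * (b k ^ (m + 1) * (a k * b k ^ (m + 1) - l)) ≤ 0 :=
          mul_nonpos_of_nonneg_of_nonpos hη.le
            (mul_nonpos_of_nonneg_of_nonpos (by positivity) (hsign k))
        linarith
      have hbdd : BddAbove (Set.range a) := ⟨c * M, by
        rintro _ ⟨k, rfl⟩
        linarith [hbK k, (hac k).2]⟩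
      exact tendsto_error_zero m η (α - β) _ a b _ hη hαβ ha
        (tendsto_atTop_ciSup hmono hbdd)
        (fun k => by linarith [hmono (Nat.zero_le k), (hac k).2])
  · intro k
    induction k with
    | zero => rw [ha0, hb0]
    | succ k ih =>
      obtain ⟨κ, h1, h2, h3⟩ := (hstep k).1
      rw [h3, abs_mul, abs_of_nonneg (by linarith : 0 ≤ 1 - κ)]
      exact (mul_le_of_le_one_left (abs_nonneg _) (by linarith)).trans ih

/-! ### Matrices diagonal in the basis `V` -/

/-- The multiplicative map `d ↦ V diag(d) Vᵀ` for an orthogonal matrix `V`. -/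
def conjDiag {n : ℕ} (V : Matrix (Fin n) (Fin n) ℝ) (hV : Vᵀ * V = 1) :
    (Fin n → ℝ) →* Matrix (Fin n) (Fin n) ℝ where
  toFun d := V * Matrix.diagonal d * Vᵀ
  map_one' := by
    have h : (Matrix.diagonal (1 : Fin n → ℝ)) = 1 := Matrix.diagonal_one
    rw [h, mul_one]; exact mul_eq_one_comm.mp hV
  map_mul' d d' := by
    have h : Matrix.diagonal (d * d') = Matrix.diagonal d * Matrix.diagonal d' :=
      (Matrix.diagonal_mul_diagonal d d').symm
    rw [h]
    calc V * (diagonal d * diagonal d') * Vᵀ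
        = V * diagonal d * 1 * diagonal d' * Vᵀ := by simp only [mul_one, mul_assoc]
      _ = _ := by rw [← hV]; simp only [mul_assoc]

lemma conjDiag_apply {n : ℕ} (V : Matrix (Fin n) (Fin n) ℝ) (hV : Vᵀ * V = 1) (d : Fin n → ℝ) :
    conjDiag V hV d = V * Matrix.diagonal d * Vᵀ := rfl

lemma conjDiag_sub {n : ℕ} (V : Matrix (Fin n) (Fin n) ℝ) (hV : Vᵀ * V = 1) (d d' : Fin n → ℝ) :
    conjDiag V hV (d - d') = conjDiag V hV d - conjDiag V hV d' := by
  have h : Matrix.diagonal (d - d') = Matrix.diagonal d - Matrix.diagonal d' :=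
    (Matrix.diagonal_sub d d').symm
  simp only [conjDiag_apply, h, mul_sub, sub_mul]

lemma conjDiag_smul {n : ℕ} (V : Matrix (Fin n) (Fin n) ℝ) (hV : Vᵀ * V = 1) (r : ℝ)
    (d : Fin n → ℝ) : conjDiag V hV (r • d) = r • conjDiag V hV d := by
  simp only [conjDiag_apply, Matrix.diagonal_smul, Matrix.mul_smul, Matrix.smul_mul]

lemma conjDiag_transpose {n : ℕ} (V : Matrix (Fin n) (Fin n) ℝ) (hV : Vᵀ * V = 1)
    (d : Fin n → ℝ) : (conjDiag V hV d)ᵀ = conjDiag V hV d := by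
  simp only [conjDiag_apply, Matrix.transpose_mul, Matrix.transpose_transpose,
    Matrix.diagonal_transpose, mul_assoc]

lemma conj_conjDiag {n : ℕ} (V : Matrix (Fin n) (Fin n) ℝ) (hV : Vᵀ * V = 1)
    (d : Fin n → ℝ) : Vᵀ * conjDiag V hV d * V = Matrix.diagonal d := by
  rw [conjDiag_apply]
  calc Vᵀ * (V * diagonal d * Vᵀ) * V = (Vᵀ * V) * diagonal d * (Vᵀ * V) := by
        simp only [mul_assoc]
    _ = _ := by rw [hV, one_mul, mul_one]

lemma conjDiag_continuous {n : ℕ} (V : Matrix (Fin n) (Fin n) ℝ) (hV : Vᵀ * V = 1) :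
    Continuous (conjDiag V hV) := by
  change Continuous fun d : Fin n → ℝ => V * Matrix.diagonal d * Vᵀ
  fun_prop

lemma abs_eigenvalue_le {n : ℕ} (V : Matrix (Fin n) (Fin n) ℝ) (hV : Vᵀ * V = 1)
    (lam : Fin n → ℝ) (i : Fin n) :
    |lam i| ≤ ‖Matrix.toEuclideanCLM (𝕜 := ℝ) (conjDiag V hV lam)‖ := by
  set v : EuclideanSpace ℝ (Fin n) := WithLp.toLp 2 (V *ᵥ Pi.single i 1) with hv
  have hT : Matrix.toEuclideanCLM (𝕜 := ℝ) (conjDiag V hV lam) v = lam i • v := by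
    rw [hv, Matrix.toEuclideanCLM_toLp, ← WithLp.toLp_smul]
    congr 1
    rw [conjDiag_apply, Matrix.mulVec_mulVec, mul_assoc, hV, mul_one, ← Matrix.mulVec_mulVec,
      ← Matrix.mulVec_smul]
    congr 1
    ext j
    rw [Matrix.mulVec_diagonal]
    by_cases h : j = i
    · subst h; simp
    · simp [h]
  have hv0 : 0 < ‖v‖ := by
    rw [norm_pos_iff]
    intro h0
    have h1 : V *ᵥ Pi.single i (1 : ℝ) = 0 := by
      simpa [hv] using h0
    have h2 : Vᵀ *ᵥ (V *ᵥ Pi.single i (1 : ℝ)) = Pi.single i 1 := by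
      rw [Matrix.mulVec_mulVec, hV, Matrix.one_mulVec]
    rw [h1, Matrix.mulVec_zero] at h2
    simpa using congrFun h2 i
  have h := (Matrix.toEuclideanCLM (𝕜 := ℝ) (conjDiag V hV lam)).le_opNorm v
  rw [hT, norm_smul, Real.norm_eq_abs] at h
  exact le_of_mul_le_mul_right h hv0

/-! ### Products of the factors -/

/-- The eigenvalues of the `m + 2` factors, in order. -/
def factorEig {R : Type*} (m : ℕ) (a b : R) (j : Fin (m + 2)) : R := if j.val = 0 then a else b

lemma ofFn_factorEig {R : Type*} (m : ℕ) (a b : R) :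
    List.ofFn (factorEig m a b) = a :: List.replicate (m + 1) b := by
  rw [List.ofFn_succ]
  have h : (fun i : Fin (m + 1) => factorEig m a b i.succ) = fun _ => b := by
    funext i
    simp [factorEig]
  rw [h, List.ofFn_const]
  simp [factorEig]

lemma map_list_reverse_prod {R S : Type*} [CommMonoid R] [Monoid S] (φ : R →* S) (L : List R) :
    (L.map φ).reverse.prod = φ L.prod := by
  rw [← List.map_reverse, List.prod_hom, List.prod_reverse]

/-- The left-hand side is the eigenvalue of the gradient with respect to the `j`-th factor. -/
lemma gradient_eig {R : Type*} [CommRing R] (m : ℕ) (a b e : R) (j : Fin (m + 2)) :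
    ((a :: List.replicate (m + 1) b).drop (j.val + 1)).prod * e *
      ((a :: List.replicate (m + 1) b).take j.val).prod =
    factorEig m (b ^ (m + 1) * e) (a * b ^ m * e) j := by
  obtain ⟨j, hj⟩ := j
  cases j with
  | zero => simp [factorEig]
  | succ j =>
    have h : m + 1 - (j + 1) + j = m := by omega
    simp only [factorEig, List.drop_succ_cons, List.take_succ_cons, List.drop_replicate,
      List.take_replicate, List.prod_cons, List.prod_replicate, Nat.add_eq_zero_iff, one_ne_zero,
      and_false, if_false]
    rw [min_eq_left (by omega : j ≤ m + 1)]
    calc b ^ (m + 1 - (j + 1)) * e * (a * b ^ j) = a * (b ^ (m + 1 - (j + 1)) * b ^ j) * e := by ring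
      _ = _ := by rw [← pow_add, h]

/-- **Theorem 2 (perturbed identical initialization).** For gradient descent on deep matrix
factorization of a symmetric ground truth `Ŵ = V Λ Vᵀ` with perturbed identical
initialization `W_1(0) = (α−β) I`, `W_j(0) = α I` (`j ≥ 2`) and small enough step size,
`W(k) → Ŵ`, the error `E(k) = Vᵀ W(k) V − Λ` is diagonal, and the small eigenvalues obey
`|E_{ii}(k)| ≤ α^N` (resp. `≤ 2α^N`). -/
theorem perturbed_initialization_convergence
    (n N : ℕ) (hN : 2 ≤ N)
    (What V : Matrix (Fin n) (Fin n) ℝ) (lam : Fin n → ℝ)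
    (hWsymm : What.IsSymm)
    (hV : Vᵀ * V = 1)
    (hdecomp : What = V * Matrix.diagonal lam * Vᵀ)
    (α β η c : ℝ)
    (hc : c ∈ Set.Ioo (1 : ℝ) 2)
    (hcsol : 1 = (c - 1) * c ^ (N - 1))
    (hcmax : ∀ c' : ℝ, 1 = (c' - 1) * c' ^ (N - 1) → c' ≤ c)
    (hβ : 0 < β / (c - 1)) (hβα : β / (c - 1) < α)
    (W : Fin N → ℕ → Matrix (Fin n) (Fin n) ℝ)
    (hinit : ∀ j : Fin N, W j 0 =
      if j.val = 0 then (α - β) • (1 : Matrix (Fin n) (Fin n) ℝ)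
      else α • (1 : Matrix (Fin n) (Fin n) ℝ))
    (P : ℕ → Matrix (Fin n) (Fin n) ℝ)
    (hP : ∀ k, P k = ((List.ofFn fun i : Fin N => W i k).reverse).prod)
    (hupd : ∀ (j : Fin N) (k : ℕ),
      W j (k+1) = W j k -
        η • ((((List.ofFn fun i : Fin N => W i k).drop (j.val + 1)).reverse.prod)ᵀ *
          (P k - What) *
          (((List.ofFn fun i : Fin N => W i k).take j.val).reverse.prod)ᵀ))
    (M : ℝ)
    (hM : M = max α (‖Matrix.toEuclideanCLM (𝕜 := ℝ) What‖ ^ ((1 : ℝ)/N)))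
    (hη0 : 0 < η)
    (hη : η < 1 / (9 * (N : ℝ) * (c * M) ^ (2*N - 2))) :
    Tendsto P atTop (nhds What) ∧
    (∀ k : ℕ, (Vᵀ * P k * V - Matrix.diagonal lam).IsDiag) ∧
    (∀ k : ℕ, ∀ i : Fin n,
      (0 ≤ lam i → lam i < α ^ N →
        |(Vᵀ * P k * V - Matrix.diagonal lam) i i| ≤ α ^ N) ∧
      (-(α ^ N) ≤ lam i → lam i < 0 →
        |(Vᵀ * P k * V - Matrix.diagonal lam) i i| ≤ 2 * α ^ N)) := by
  obtain ⟨m, rfl⟩ : ∃ m, N = m + 2 := ⟨N - 2, by omega⟩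
  obtain ⟨hc1, hc2⟩ := hc
  have hα : 0 < α := hβ.trans hβα
  have hβ' : 0 < β := by
    have := mul_pos hβ (by linarith : 0 < c - 1)
    rwa [div_mul_cancel₀ _ (by linarith : c - 1 ≠ 0)] at this
  have hβα' : β < (c - 1) * α := by
    rw [div_lt_iff₀ (by linarith)] at hβα; linarith
  have hαM : α ≤ M := hM ▸ le_max_left _ _
  have hM0 : 0 < M := hα.trans_le hαM
  have hη9 : η * ((m + 2) * (c * M) ^ (2 * m + 2)) ≤ 1 / 9 := by
    have hpos : (0 : ℝ) < 9 * ((m + 2 : ℕ) : ℝ) * (c * M) ^ (2 * (m + 2) - 2) := by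
      have : 0 < c * M := by positivity
      positivity
    rw [lt_div_iff₀ hpos, show 2 * (m + 2) - 2 = 2 * m + 2 by omega] at hη
    push_cast at hη
    linarith
  have hWhat : What = conjDiag V hV lam := hdecomp
  have hl : ∀ i, |lam i| ≤ M ^ (m + 2) := by
    intro i
    refine (abs_eigenvalue_le V hV lam i).trans ?_
    rw [← hWhat]
    have h1 : ‖Matrix.toEuclideanCLM (𝕜 := ℝ) What‖ ^ ((1 : ℝ) / (m + 2 : ℕ)) ≤ M :=
      hM ▸ le_max_right _ _
    calc ‖Matrix.toEuclideanCLM (𝕜 := ℝ) What‖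
        = (‖Matrix.toEuclideanCLM (𝕜 := ℝ) What‖ ^ ((1 : ℝ) / (m + 2 : ℕ))) ^ (m + 2) := by
          rw [one_div, Real.rpow_inv_natCast_pow (norm_nonneg _) (by omega)]
      _ ≤ M ^ (m + 2) := by gcongr
  set A : ℕ → Fin n → ℝ := fun k i => (scalarGD m η (lam i) (α - β) α k).1 with hA
  set B : ℕ → Fin n → ℝ := fun k i => (scalarGD m η (lam i) (α - β) α k).2 with hB
  have hA' : ∀ k, A (k + 1) = A k - η • (B k ^ (m + 1) * (A k * B k ^ (m + 1) - lam)) := by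
    intro k; ext i; rfl
  have hB' : ∀ k, B (k + 1) = B k - η • (A k * B k ^ m * (A k * B k ^ (m + 1) - lam)) := by
    intro k; ext i; rfl
  have hofFn : ∀ k, (∀ j, W j k = conjDiag V hV (factorEig m (A k) (B k) j)) →
      (List.ofFn fun i => W i k) = (A k :: List.replicate (m + 1) (B k)).map (conjDiag V hV) := by
    intro k h
    rw [← ofFn_factorEig, List.map_ofFn]
    congr 1
    funext j
    exact h j
  have hPk : ∀ k, (∀ j, W j k = conjDiag V hV (factorEig m (A k) (B k) j)) →
      P k = conjDiag V hV (A k * B k ^ (m + 1)) := by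
    intro k h
    rw [hP, hofFn k h, map_list_reverse_prod]
    simp
  have hW : ∀ k j, W j k = conjDiag V hV (factorEig m (A k) (B k) j) := by
    intro k
    induction k with
    | zero =>
      intro j
      have h1 : ∀ r : ℝ, r • (1 : Matrix (Fin n) (Fin n) ℝ) = conjDiag V hV (fun _ => r) := by
        intro r
        rw [← map_one (conjDiag V hV), ← conjDiag_smul]
        congr 1
        ext i; simp
      rw [hinit, h1, h1, factorEig]
      split_ifs <;> rfl
    | succ k ih =>
      intro j
      rw [hupd, hPk k ih, hofFn k ih, ← List.map_drop, ← List.map_take, map_list_reverse_prod,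
        map_list_reverse_prod, conjDiag_transpose, conjDiag_transpose, hWhat, ← conjDiag_sub,
        ← map_mul, ← map_mul, gradient_eig, ← conjDiag_smul, ih, ← conjDiag_sub, hA', hB']
      congr 1
      unfold factorEig
      split_ifs <;> rfl
  have hPφ : ∀ k, P k = conjDiag V hV (A k * B k ^ (m + 1)) := fun k => hPk k (hW k)
  have hE : ∀ k, Vᵀ * P k * V - Matrix.diagonal lam =
      Matrix.diagonal (fun i => A k i * B k i ^ (m + 1) - lam i) := by
    intro k
    rw [hPφ, conj_conjDiag, Matrix.diagonal_sub]
    rfl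
  have hscalar := fun i => scalar_convergence m (lam i) η c M α β hη0 hc1 hc2 hβ' hβα' hα hαM
    (hl i) hη9 (fun k => A k i) (fun k => B k i) rfl rfl (fun _ => rfl) (fun _ => rfl)
  have hp0 : 0 ≤ (α - β) * α ^ (m + 1) := by
    have : 0 < α - β := by nlinarith
    positivity
  have hp1 : (α - β) * α ^ (m + 1) ≤ α ^ (m + 2) := by
    have : α ^ (m + 2) = α * α ^ (m + 1) := by ring
    rw [this]
    gcongr
    linarith
  refine ⟨?_, fun k => ?_, fun k i => ?_⟩
  · rw [hWhat, show P = fun k => conjDiag V hV (A k * B k ^ (m + 1)) from funext hPφ]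
    refine ((conjDiag_continuous V hV).tendsto lam).comp (tendsto_pi_nhds.mpr fun i => ?_)
    simpa using (hscalar i).1.add_const (lam i)
  · rw [hE]; exact Matrix.isDiag_diagonal _
  · rw [hE, Matrix.diagonal_apply_eq]
    have h := (hscalar i).2 k
    refine ⟨fun h0 h1 => h.trans (abs_le.mpr ⟨by linarith, by linarith⟩),
      fun h0 h1 => h.trans (abs_le.mpr ⟨by linarith, by linarith⟩)⟩
end

section
/- Let N ≥ 2, let Ŵ = V Λ Vᵀ ∈ ℝ^{n×n} be an eigendecomposition of the symmetric matrix Ŵ (V orthogonal, Λ diagonal), and let W_1(k), …, W_N(k) be the gradient descent iterates with identical initialization W_j(0) = α·I, α > 0. Then for every k the matrices D_j(k) := Vᵀ·W_j(k)·V are real, diagonal and identical in j, i.e., there is a diagonal matrix D(k) with D_j(k) = D(k) for all j ∈ {1,…,N}, and D satisfies D(0) = α·I and D(k+1) = D(k) − η·D(k)^{N−1}·(D(k)^N − Λ) for all k ∈ ℕ. -/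
/-!
Conjugation by the orthogonal matrix `V` sends diagonal matrices to a commutative algebra of
symmetric matrices that contains `What` and every multiple of the identity. By induction on the
step, all factors equal `V * diagonal (d k) * Vᵀ`, where `d` follows the scalar recursion
`d (k + 1) = d k - η * d k ^ (N - 1) * (d k ^ N - lam)`: the partial products to the left and to
the right of factor `j` are powers of one matrix, with exponents `N - (j + 1)` and `j`, and they
combine to the exponent `N - 1` for each `j`, so equality of the factors is preserved.
-/


open Matrix

/-- The diagonal entries of the common conjugated factor along gradient descent. -/
def diagIter {n : ℕ} (N : ℕ) (lam : Fin n → ℝ) (α η : ℝ) : ℕ → Fin n → ℝ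
  | 0 => fun _ => α
  | k + 1 => fun i => diagIter N lam α η k i -
      η * (diagIter N lam α η k i ^ (N - 1) * (diagIter N lam α η k i ^ N - lam i))

theorem conj_diagonal_mul {n : ℕ} {V : Matrix (Fin n) (Fin n) ℝ} (hV : Vᵀ * V = 1)
    (x y : Fin n → ℝ) :
    (V * diagonal x * Vᵀ) * (V * diagonal y * Vᵀ) = V * diagonal (x * y) * Vᵀ := by
  calc _ = V * diagonal x * (Vᵀ * V) * diagonal y * Vᵀ := by simp only [Matrix.mul_assoc]
    _ = V * (diagonal x * diagonal y) * Vᵀ := by rw [hV]; simp only [Matrix.mul_one, Matrix.mul_assoc]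
    _ = _ := by rw [diagonal_mul_diagonal]; rfl

theorem conj_diagonal_pow {n : ℕ} {V : Matrix (Fin n) (Fin n) ℝ} (hV : Vᵀ * V = 1)
    (x : Fin n → ℝ) (m : ℕ) :
    (V * diagonal x * Vᵀ) ^ m = V * diagonal (x ^ m) * Vᵀ := by
  induction m with
  | zero =>
    have h : V * Vᵀ = 1 := mul_eq_one_comm.mp hV
    simp [h]
  | succ m ih => rw [pow_succ, ih, conj_diagonal_mul hV, pow_succ]

theorem conj_diagonal_transpose {n : ℕ} (V : Matrix (Fin n) (Fin n) ℝ) (x : Fin n → ℝ) :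
    (V * diagonal x * Vᵀ)ᵀ = V * diagonal x * Vᵀ := by
  simp [Matrix.mul_assoc]

theorem conj_diagonal_sub {n : ℕ} (V : Matrix (Fin n) (Fin n) ℝ) (x y : Fin n → ℝ) :
    V * diagonal x * Vᵀ - V * diagonal y * Vᵀ = V * diagonal (x - y) * Vᵀ := by
  rw [← Matrix.sub_mul, ← Matrix.mul_sub, diagonal_sub]; rfl

/-- **Decoupling lemma (identical initialization).** With identical initialization
`W_j(0) = α I`, the matrices `D_j(k) = Vᵀ W_j(k) V` are diagonal and identical in `j`,
with `D(0) = α I` and `D(k+1) = D(k) − η D(k)^{N−1} (D(k)^N − Λ)`. -/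
theorem identical_initialization_decoupling
    (n N : ℕ) (hN : 2 ≤ N)
    (What V : Matrix (Fin n) (Fin n) ℝ) (lam : Fin n → ℝ)
    (hWsymm : What.IsSymm)
    (hV : Vᵀ * V = 1)
    (hdecomp : What = V * Matrix.diagonal lam * Vᵀ)
    (α η : ℝ) (hα : 0 < α)
    (W : Fin N → ℕ → Matrix (Fin n) (Fin n) ℝ)
    (hinit : ∀ j, W j 0 = α • (1 : Matrix (Fin n) (Fin n) ℝ))
    (P : ℕ → Matrix (Fin n) (Fin n) ℝ)
    (hP : ∀ k, P k = ((List.ofFn fun i : Fin N => W i k).reverse).prod)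
    (hupd : ∀ (j : Fin N) (k : ℕ),
      W j (k+1) = W j k -
        η • ((((List.ofFn fun i : Fin N => W i k).drop (j.val + 1)).reverse.prod)ᵀ *
          (P k - What) *
          (((List.ofFn fun i : Fin N => W i k).take j.val).reverse.prod)ᵀ)) :
    ∃ D : ℕ → Matrix (Fin n) (Fin n) ℝ,
      (∀ k, (D k).IsDiag) ∧
      (∀ (j : Fin N) (k : ℕ), Vᵀ * W j k * V = D k) ∧
      D 0 = α • (1 : Matrix (Fin n) (Fin n) ℝ) ∧
      (∀ k : ℕ, D (k+1) = D k - η • (D k ^ (N - 1) * (D k ^ N - Matrix.diagonal lam))) := by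
  have hV' : V * Vᵀ = 1 := mul_eq_one_comm.mp hV
  have key : ∀ k j, W j k = V * diagonal (diagIter N lam α η k) * Vᵀ := by
    intro k
    induction k with
    | zero =>
      intro j
      have h : diagonal (diagIter N lam α η 0) = α • (1 : Matrix (Fin n) (Fin n) ℝ) := by
        rw [smul_one_eq_diagonal]; rfl
      rw [hinit, h]
      simp [hV']
    | succ k ih =>
      intro j
      have hj : N - (j.val + 1) + j.val = N - 1 := by omega
      rw [hupd, hP]
      simp only [ih, List.ofFn_const, List.drop_replicate, List.take_replicate,
        List.reverse_replicate, List.prod_replicate, min_eq_left j.isLt.le]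
      rw [hdecomp]
      simp only [conj_diagonal_pow hV, conj_diagonal_transpose, conj_diagonal_sub,
        conj_diagonal_mul hV]
      rw [← Matrix.smul_mul, ← Matrix.mul_smul, ← diagonal_smul, conj_diagonal_sub]
      congr 3
      ext i
      simp only [diagIter, Pi.sub_apply, Pi.smul_apply, Pi.mul_apply, Pi.pow_apply, smul_eq_mul]
      rw [← hj, pow_add]
      ring
  refine ⟨fun k => diagonal (diagIter N lam α η k), fun k => isDiag_diagonal _, ?_, ?_, ?_⟩
  · intro j k
    rw [key]
    calc _ = (Vᵀ * V) * diagonal (diagIter N lam α η k) * (Vᵀ * V) := by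
          simp only [Matrix.mul_assoc]
      _ = _ := by simp [hV]
  · rw [smul_one_eq_diagonal]; rfl
  · intro k
    simp only [diagonal_pow, diagonal_sub, diagonal_mul_diagonal, ← diagonal_smul]
    rfl
end
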